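/- arXiv:2601.13058 — 2 statements merged into one kernel-verified Lean document; each statement's English description precedes it below -/
import Mathlib

section
/- The map h has infinite order as a permutation of ℕ → Bool: for every integer k ≥ 1, the k-th iterate h^k is not the identity. -/
/-- Concatenation of a finite binary word `u` with an infinite sequence `x`
in the Cantor space `ℕ → Bool`. -/
def cat (u : List Bool) (x : ℕ → Bool) : ℕ → Bool :=
  fun i => u.getD i (x (i - u.length))

/-- `h` satisfies the defining prefix rules: `h(00w) = 01w`, `h(01w) = 00w`,
`h(10w) = 100w`, `h(110w) = 101w`, `h(111w) = 11w`. -/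
def HRules (h : (ℕ → Bool) → ℕ → Bool) : Prop :=
  ∀ w : ℕ → Bool,
    h (cat [false, false] w) = cat [false, true] w ∧
    h (cat [false, true] w) = cat [false, false] w ∧
    h (cat [true, false] w) = cat [true, false, false] w ∧
    h (cat [true, true, false] w) = cat [true, false, true] w ∧
    h (cat [true, true, true] w) = cat [true, true] w

/-!
A map sending `u ++ w` to `u ++ v ++ w` acts on the cylinder of sequences with prefix `u` as a copy
of the map `w ↦ v ++ w`. For nonempty `v` the latter is not surjective, since the first entry of
its values is fixed, so none of its positive iterates is the identity. The map `h` is of this kind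
on the cylinder of `10`, where it inserts a `0`.
-/

open Function

theorem cat_append (u v : List Bool) (w : ℕ → Bool) : cat (u ++ v) w = cat u (cat v w) := by
  funext i
  rcases lt_or_ge i u.length with hi | hi
  · simp [cat, List.getElem?_append_left, hi]
  · simp [cat, List.getElem?_append_right, hi, Nat.sub_sub]

theorem cat_injective (u : List Bool) : Injective (cat u) := by
  intro x y hxy
  funext i
  simpa [cat] using congrFun hxy (u.length + i)

theorem not_surjective_cat {v : List Bool} (hv : v ≠ []) : ¬ Surjective (cat v) := by
  obtain ⟨b, v, rfl⟩ := List.exists_cons_of_ne_nil hv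
  intro hsurj
  obtain ⟨w, hw⟩ := hsurj fun _ => !b
  have hb : b = !b := congrFun hw 0
  simp at hb

theorem iterate_ne_id_of_not_surjective {α : Type*} {f : α → α} (hf : ¬ Surjective f) {k : ℕ}
    (hk : k ≠ 0) : f^[k] ≠ id := by
  obtain ⟨n, rfl⟩ := Nat.exists_eq_succ_of_ne_zero hk
  intro hid
  rw [iterate_succ'] at hid
  exact hf (Surjective.of_comp (hid ▸ surjective_id))

theorem iterate_eq_id_of_semiconj {α β : Type*} {φ : α → β} {g : α → α} {f : β → β}
    (hφ : Injective φ) (h : Semiconj φ g f) {k : ℕ} (hid : f^[k] = id) : g^[k] = id := by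
  funext x
  apply hφ
  simpa [hid] using h.iterate_right k x

theorem h_infinite_order_general {f : (ℕ → Bool) → ℕ → Bool} {u v : List Bool} (hv : v ≠ [])
    (hf : ∀ w, f (cat u w) = cat (u ++ v) w) : ∀ k, 1 ≤ k → f^[k] ≠ id := by
  intro k hk hid
  have hsemi : Semiconj (cat u) (cat v) f := fun w => by rw [hf, cat_append]
  exact iterate_ne_id_of_not_surjective (not_surjective_cat hv) (Nat.one_le_iff_ne_zero.mp hk)
    (iterate_eq_id_of_semiconj (cat_injective u) hsemi hid)

/-- The map `h` has infinite order as a permutation of `ℕ → Bool`: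
no positive iterate of `h` is the identity. -/
theorem h_infinite_order (h : (ℕ → Bool) → ℕ → Bool) (hh : HRules h) :
    ∀ k, 1 ≤ k → h^[k] ≠ id :=
  h_infinite_order_general (u := [true, false]) (List.cons_ne_nil false [])
    fun w => (hh w).2.2.1
end

section
/- Let n ≥ 1 and let g be a prefix-exchange map with n parts on the Cantor space ℕ → Bool. If g has finite order as a permutation of ℕ → Bool, then there exist an integer k with 1 ≤ k ≤ n and positive integers l_1, …, l_k with l_1 + ⋯ + l_k ≤ 2^{n−1} such that the order of g equals lcm(l_1, …, l_k). -/
/-- A finite family of binary words is a complete prefix code if every point of the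
Cantor space has exactly one of the words as a prefix. -/
def IsCompletePrefixCode {m : ℕ} (u : Fin m → List Bool) : Prop :=
  ∀ x : ℕ → Bool, ∃! i : Fin m, ∃ w : ℕ → Bool, x = cat (u i) w

/-- A prefix-exchange map with `n` parts: there are complete prefix codes
`(u_1, …, u_n)` and `(v_1, …, v_n)` and a permutation `σ` of `{1, …, n}` with
`g(u_i ++ w) = v_{σ(i)} ++ w` for all `i` and `w`. -/
def IsPrefixExchange (n : ℕ) (g : (ℕ → Bool) → ℕ → Bool) : Prop :=
  ∃ u v : Fin n → List Bool, IsCompletePrefixCode u ∧ IsCompletePrefixCode v ∧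
    ∃ σ : Equiv.Perm (Fin n),
      ∀ (i : Fin n) (w : ℕ → Bool), g (cat (u i) w) = cat (v (σ i)) w

/-!
Call a word split if `g` does not act on its cylinder by replacing the word as a prefix; there are
at most `n - 1` split words. A word `p` on which some iterate of `g` is not a prefix replacement is
carried by an earlier iterate to a split word. Nested words `p` of this kind reach distinct split
words, because an element of finite order cannot replace `p` by a proper extension of `p`, so each
such `p` has length less than `n - 1`. The minimal words on which all iterates are prefix
replacements therefore have length at most `n - 1`, and there are at most `2 ^ (n - 1)` of them.
The map `g` permutes these words, its order is the least common multiple of the orbit lengths, and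
every orbit contains one of the at most `n` minimal words that are not split.
-/

section OrbitLengths

open MulAction

variable {G α ι : Type*} [Group G] [MulAction G α]

theorem ncard_orbit_zpowers (g : G) (a : α) :
    (orbit (Subgroup.zpowers g) a).ncard = Function.minimalPeriod (g • ·) a := by
  rw [← Nat.card_coe_set_eq, Nat.card_congr (orbitZPowersEquiv g a), Nat.card_zmod]

theorem orderOf_dvd_iff_forall_ncard_orbit_dvd [FaithfulSMul G α] (g : G) (N : ℕ) :
    orderOf g ∣ N ↔ ∀ ω : orbitRel.Quotient (Subgroup.zpowers g) α, ω.orbit.ncard ∣ N :=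
  calc orderOf g ∣ N ↔ ∀ a : α, g ^ N • a = a := by
        rw [orderOf_dvd_iff_pow_eq_one]
        exact ⟨fun h a => by rw [h, one_smul],
          fun h => FaithfulSMul.eq_of_smul_eq_smul fun a => by rw [h a, one_smul]⟩
    _ ↔ ∀ a : α, (orbit (Subgroup.zpowers g) a).ncard ∣ N := by
        simp only [pow_smul_eq_iff_minimalPeriod_dvd, ncard_orbit_zpowers]
    _ ↔ ∀ ω : orbitRel.Quotient (Subgroup.zpowers g) α, ω.orbit.ncard ∣ N :=
        (Quotient.mk_surjective.forall
          (p := fun ω : orbitRel.Quotient _ α => ω.orbit.ncard ∣ N)).symm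

theorem orderOf_eq_lcm_ncard_orbit [FaithfulSMul G α] [Fintype ι] (g : G)
    (e : ι ≃ orbitRel.Quotient (Subgroup.zpowers g) α) :
    orderOf g = Finset.univ.lcm fun i => (e i).orbit.ncard := by
  refine Nat.dvd_right_iff_eq.1 fun N => ?_
  rw [orderOf_dvd_iff_forall_ncard_orbit_dvd (α := α), Finset.lcm_dvd_iff,
    e.surjective.forall]
  simp only [Finset.mem_univ, true_imp_iff]

theorem sum_ncard_orbit [Finite α] [Fintype ι] (e : ι ≃ orbitRel.Quotient G α) :
    ∑ i, (e i).orbit.ncard = Nat.card α := by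
  rw [Nat.card_congr ((selfEquivSigmaOrbits' G α).trans (Equiv.sigmaCongrLeft e).symm),
    Nat.card_sigma]
  rfl

end OrbitLengths

section Cat

theorem cat_append_s10 (p q : List Bool) (x : ℕ → Bool) : cat (p ++ q) x = cat p (cat q x) := by
  funext i
  rcases lt_or_ge i p.length with hi | hi
  · simp [cat, List.getElem?_append, hi]
  · simp [cat, List.getElem?_append, hi.not_gt, Nat.sub_sub]

theorem cat_apply_of_lt {p : List Bool} (x : ℕ → Bool) {i : ℕ} (hi : i < p.length) :
    cat p x i = p[i] := by
  simp [cat, hi]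

theorem cat_right_injective (p : List Bool) : Function.Injective (cat p) := by
  intro x y hxy
  funext i
  simpa [cat] using congrFun hxy (p.length + i)

theorem prefix_of_cat_eq_cat {p q : List Bool} {x y : ℕ → Bool} (h : cat p x = cat q y)
    (hlen : p.length ≤ q.length) : p <+: q :=
  List.prefix_iff_getElem.2 ⟨hlen, fun i hi => by
    rw [← cat_apply_of_lt x hi, h, cat_apply_of_lt y (hi.trans_le hlen)]⟩

theorem prefix_or_prefix_of_cat_eq_cat {p q : List Bool} {x y : ℕ → Bool}
    (h : cat p x = cat q y) : p <+: q ∨ q <+: p :=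
  (le_total p.length q.length).imp (prefix_of_cat_eq_cat h) (prefix_of_cat_eq_cat h.symm)

theorem eq_nil_of_forall_cat_eq_self {p : List Bool} (h : ∀ x, cat p x = x) : p = [] := by
  cases p with
  | nil => rfl
  | cons b p => simpa [cat] using congrFun (h fun _ => !b) 0

theorem cat_left_injective : Function.Injective cat := by
  suffices H : ∀ {p q : List Bool}, cat p = cat q → p <+: q → p = q by
    intro p q h
    rcases prefix_or_prefix_of_cat_eq_cat (congrFun h fun _ => false) with hpq | hqp
    · exact H h hpq
    · exact (H h.symm hqp).symm
  rintro p _ h ⟨z, rfl⟩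
  have hz : z = [] := eq_nil_of_forall_cat_eq_self fun x =>
    cat_right_injective p ((cat_append_s10 p z x).symm.trans (congrFun h x).symm)
  rw [hz, List.append_nil]

theorem exists_length_eq_and_cat_eq (x : ℕ → Bool) (N : ℕ) :
    ∃ w y, w.length = N ∧ cat w y = x := by
  refine ⟨List.ofFn fun i : Fin N => x i, fun i => x (N + i), List.length_ofFn, ?_⟩
  funext i
  rcases lt_or_ge i N with hi | hi
  · simp [cat, hi]
  · simp [cat, hi]

end Cat

section Tree

open Descriptive

variable {α ι : Type*}

/-- The minimal words outside a prefix-closed set `T`: if `T` is the set of interior nodes of a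
rooted tree in which each interior node `p` has the children `p ++ [a]`, these are its leaves. -/
def leaves (T : tree α) : Set (List α) :=
  {w | w ∉ T ∧ ∀ p a, w = p ++ [a] → p ∈ T}

theorem exists_prefix_mem_leaves {T : tree α} {w : List α} (hw : w ∉ T) :
    ∃ p, p <+: w ∧ p ∈ leaves T := by
  induction w using List.reverseRecOn with
  | nil => exact ⟨[], List.prefix_rfl, hw, by simp⟩
  | append_singleton w a ih =>
    by_cases hwT : w ∈ T
    · refine ⟨w ++ [a], List.prefix_rfl, hw, fun p b h => ?_⟩
      rwa [← (List.append_inj' h rfl).1]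
    · obtain ⟨p, hpw, hp⟩ := ih hwT
      exact ⟨p, hpw.trans (List.prefix_append w [a]), hp⟩

theorem eq_of_prefix_of_mem_leaves {T : tree α} {p q : List α} (hp : p ∈ leaves T)
    (hq : q ∈ leaves T) (hpq : p <+: q) : p = q := by
  rcases List.eq_nil_or_concat' q with rfl | ⟨r, a, rfl⟩
  · exact List.prefix_nil.1 hpq
  · refine (List.prefix_concat_iff.1 hpq).resolve_right fun hpr => hp.1 ?_
    exact Tree.mem_of_prefix hpr (hq.2 r a rfl)

theorem nonempty_leaves [Nonempty α] {T : tree α} (hT : (T : Set (List α)).Finite) :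
    (leaves T).Nonempty := by
  obtain ⟨w, hw⟩ := hT.exists_notMem
  obtain ⟨p, -, hp⟩ := exists_prefix_mem_leaves hw
  exact ⟨p, hp⟩

theorem union_leaves_eq (T : tree α) :
    (T : Set (List α)) ∪ leaves T =
      insert [] ((fun q : List α × α => q.1 ++ [q.2]) '' ((T : Set (List α)) ×ˢ Set.univ)) := by
  ext w
  rcases List.eq_nil_or_concat' w with rfl | ⟨p, a, rfl⟩
  · simp [leaves, em]
  · have hparent : p ++ [a] ∈ T ∨ p ++ [a] ∈ leaves T ↔ p ∈ T := by
      refine ⟨fun h => h.elim Tree.mem_of_append fun h => h.2 p a rfl, fun hp => ?_⟩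
      refine or_iff_not_imp_left.2 fun h => ⟨h, fun q b hq => ?_⟩
      rwa [← (List.append_inj' hq rfl).1]
    simpa using hparent

theorem finite_leaves [Finite α] {T : tree α} (hT : (T : Set (List α)).Finite) :
    (leaves T).Finite := by
  have hchildren := (hT.prod (Set.finite_univ (α := α))).image fun q => q.1 ++ [q.2]
  exact (hchildren.insert []).subset (union_leaves_eq T ▸ Set.subset_union_right)

theorem ncard_add_ncard_leaves [Finite α] {T : tree α} (hT : (T : Set (List α)).Finite) :
    (T : Set (List α)).ncard + (leaves T).ncard = Nat.card α * (T : Set (List α)).ncard + 1 := by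
  have hinj : Function.Injective fun q : List α × α => q.1 ++ [q.2] := fun q r h =>
    Prod.ext (List.append_inj' h rfl).1 (by simpa using (List.append_inj' h rfl).2)
  have hdisj : Disjoint (T : Set (List α)) (leaves T) :=
    Set.disjoint_right.2 fun _ hw => hw.1
  rw [← Set.ncard_union_eq hdisj hT (finite_leaves hT), union_leaves_eq,
    Set.ncard_insert_of_notMem (by simp) ((hT.prod Set.finite_univ).image _),
    Set.ncard_image_of_injective _ hinj, Set.ncard_prod, Set.ncard_univ, mul_comm]

theorem ncard_leaves_bool {T : tree Bool} (hT : (T : Set (List Bool)).Finite) :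
    (leaves T).ncard = (T : Set (List Bool)).ncard + 1 := by
  have hcard := ncard_add_ncard_leaves hT
  rw [Nat.card_eq_fintype_card, Fintype.card_bool] at hcard
  omega

theorem length_le_of_mem_leaves {T : tree α} {N : ℕ} (hT : ∀ p ∈ T, p.length < N)
    {w : List α} (hw : w ∈ leaves T) : w.length ≤ N := by
  rcases List.eq_nil_or_concat' w with rfl | ⟨p, a, rfl⟩
  · exact Nat.zero_le N
  · simpa using hT p (hw.2 p a rfl)

theorem ncard_leaves_le_pow [Finite α] [Nonempty α] {T : tree α} {N : ℕ}
    (hT : ∀ p ∈ T, p.length < N) : (leaves T).ncard ≤ Nat.card α ^ N := by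
  have := Fintype.ofFinite α
  obtain ⟨a⟩ := ‹Nonempty α›
  let pad (w : List α) : List α := w ++ List.replicate (N - w.length) a
  have hpad_mem : ∀ w ∈ leaves T, pad w ∈ {l : List α | l.length = N} := fun w hw => by
    have := length_le_of_mem_leaves hT hw
    simp only [pad, Set.mem_ofPred_eq, List.length_append, List.length_replicate]
    omega
  have hpad_inj : Set.InjOn pad (leaves T) := fun p hp q hq hpq => by
    have hqp : q <+: pad p := hpq ▸ List.prefix_append q _
    rcases List.prefix_or_prefix_of_prefix (List.prefix_append p _) hqp with h | h
    · exact eq_of_prefix_of_mem_leaves hp hq h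
    · exact (eq_of_prefix_of_mem_leaves hq hp h).symm
  calc (leaves T).ncard ≤ {l : List α | l.length = N}.ncard :=
        Set.ncard_le_ncard_of_injOn pad hpad_mem hpad_inj (List.finite_length_eq α N)
    _ = Nat.card (List.Vector α N) := rfl
    _ = Nat.card α ^ N := by rw [Nat.card_eq_fintype_card, card_vector, Nat.card_eq_fintype_card]

/-- The words that extend no word of the family `u`: for a complete prefix code, the interior nodes
of the tree whose leaves are the code words. -/
def codeTree (u : ι → List α) : tree α :=
  ⟨{w | ∀ i, ¬ u i <+: w}, fun w a hw i hi => hw i (hi.trans (List.prefix_append w [a]))⟩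

theorem mem_codeTree {u : ι → List α} {w : List α} : w ∈ codeTree u ↔ ∀ i, ¬ u i <+: w :=
  Iff.rfl

theorem leaves_codeTree_subset_range (u : ι → List α) : leaves (codeTree u) ⊆ Set.range u := by
  rintro w ⟨hw, hparent⟩
  simp only [mem_codeTree, not_forall, not_not] at hw
  obtain ⟨i, hi⟩ := hw
  refine ⟨i, ?_⟩
  rcases List.eq_nil_or_concat' w with rfl | ⟨p, a, rfl⟩
  · exact List.prefix_nil.1 hi
  · exact (List.prefix_concat_iff.1 hi).resolve_right (hparent p a rfl i)

end Tree

section PrefixCode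

variable {n : ℕ} {u : Fin n → List Bool}

theorem finite_codeTree (hu : IsCompletePrefixCode u) :
    (codeTree u : Set (List Bool)).Finite := by
  refine (Set.finite_iUnion fun i => List.finite_toSet (u i).inits).subset fun w hw => ?_
  obtain ⟨i, ⟨y, hy⟩, -⟩ := hu (cat w fun _ => false)
  have hwi : w <+: u i := (prefix_or_prefix_of_cat_eq_cat hy).resolve_right (hw i)
  exact Set.mem_iUnion.2 ⟨i, (List.mem_inits w (u i)).2 hwi⟩

theorem ncard_codeTree_lt (hu : IsCompletePrefixCode u) :
    (codeTree u : Set (List Bool)).ncard < n := by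
  have hleaves : (leaves (codeTree u)).ncard ≤ n :=
    calc (leaves (codeTree u)).ncard ≤ (Set.range u).ncard :=
          Set.ncard_le_ncard (leaves_codeTree_subset_range u) (Set.finite_range u)
      _ ≤ n := by simpa [Set.image_univ] using Set.ncard_image_le (f := u) Set.finite_univ
  rwa [ncard_leaves_bool (finite_codeTree hu), Nat.succ_le_iff] at hleaves

theorem exists_mem_leaves_cat_eq {T : Descriptive.tree Bool} (hT : (T : Set (List Bool)).Finite)
    (x : ℕ → Bool) : ∃ w ∈ leaves T, ∃ y, cat w y = x := by
  obtain ⟨N, hN⟩ : ∃ N, ∀ p ∈ T, p.length < N := by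
    obtain ⟨N, hN⟩ := (hT.image List.length).bddAbove
    exact ⟨N + 1, fun p hp => Nat.lt_succ_of_le (hN (Set.mem_image_of_mem _ hp))⟩
  obtain ⟨w, y, hlen, rfl⟩ := exists_length_eq_and_cat_eq x N
  obtain ⟨p, ⟨z, rfl⟩, hp⟩ := exists_prefix_mem_leaves fun hw => (hN w hw).ne hlen
  exact ⟨p, hp, cat z y, (cat_append_s10 p z y).symm⟩

end PrefixCode

/-- `f` maps the cylinder of `p` onto the cylinder of `q` by exchanging the prefix `p` for `q`. -/
def ReplacesPrefix (f : (ℕ → Bool) → ℕ → Bool) (p q : List Bool) : Prop :=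
  ∀ x, f (cat p x) = cat q x

namespace ReplacesPrefix

variable {f f' h : (ℕ → Bool) → ℕ → Bool} {p q r z : List Bool} {m : ℕ}

theorem refl (p : List Bool) : ReplacesPrefix id p p := fun _ => rfl

theorem right_unique (hq : ReplacesPrefix f p q) (hr : ReplacesPrefix f p r) : q = r :=
  cat_left_injective (funext fun x => (hq x).symm.trans (hr x))

theorem append (hf : ReplacesPrefix f p q) (z : List Bool) :
    ReplacesPrefix f (p ++ z) (q ++ z) := fun x => by
  rw [cat_append_s10, hf, cat_append_s10]

theorem comp (hf' : ReplacesPrefix f' q r) (hf : ReplacesPrefix f p q) :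
    ReplacesPrefix (f' ∘ f) p r := fun x => by
  rw [Function.comp_apply, hf, hf']

theorem of_comp (hcomp : ReplacesPrefix (f' ∘ f) p r) (hf : ReplacesPrefix f p q) :
    ReplacesPrefix f' q r := fun x => by
  rw [← hf, ← hcomp, Function.comp_apply]

theorem iterate_pred (hm : 0 < m) (hh : h^[m] = id) (hpq : ReplacesPrefix h p q) :
    ReplacesPrefix h^[m - 1] q p := by
  refine of_comp ?_ hpq
  rw [← Function.iterate_succ, Nat.succ_eq_add_one, Nat.sub_add_cancel hm, hh]
  exact ReplacesPrefix.refl p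

theorem iterate_append (hpz : ReplacesPrefix h p (p ++ z)) (k : ℕ) :
    ReplacesPrefix h^[k] p (p ++ (List.replicate k z).flatten) := by
  induction k with
  | zero => simpa using ReplacesPrefix.refl p
  | succ k ih =>
    rw [Function.iterate_succ', List.replicate_succ, List.flatten_cons, ← List.append_assoc]
    exact (hpz.append _).comp ih

theorem eq_nil_of_append (hm : 0 < m) (hh : h^[m] = id)
    (hpz : ReplacesPrefix h p (p ++ z)) : z = [] := by
  have hp := hpz.iterate_append m
  rw [hh] at hp
  have hflat := List.self_eq_append_right.1 ((ReplacesPrefix.refl p).right_unique hp)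
  exact List.flatten_eq_nil_iff.1 hflat z (List.mem_replicate.2 ⟨hm.ne', rfl⟩)

end ReplacesPrefix

/-- The words on whose cylinders `f` is not given by a prefix replacement. -/
def splitTree (f : (ℕ → Bool) → ℕ → Bool) : Descriptive.tree Bool :=
  ⟨{p | ∀ q, ¬ ReplacesPrefix f p q}, fun _ b hp q hq => hp (q ++ [b]) (hq.append [b])⟩

/-- The words on whose cylinders some iterate of `g` is not given by a prefix replacement. -/
def iterateSplitTree (g : (ℕ → Bool) → ℕ → Bool) : Descriptive.tree Bool :=
  ⨆ j : ℕ, splitTree g^[j]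

section SplitTree

variable {f g : (ℕ → Bool) → ℕ → Bool} {p q w : List Bool} {m : ℕ}

theorem mem_splitTree : p ∈ splitTree f ↔ ∀ q, ¬ ReplacesPrefix f p q := Iff.rfl

theorem notMem_splitTree : p ∉ splitTree f ↔ ∃ q, ReplacesPrefix f p q := by
  simp only [mem_splitTree, not_forall, not_not]

theorem splitTree_le_codeTree {ι : Type*} {u v : ι → List Bool}
    (hf : ∀ i, ReplacesPrefix f (u i) (v i)) : splitTree f ≤ codeTree u := by
  rintro _ hp i ⟨z, rfl⟩
  exact hp _ ((hf i).append z)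

theorem finite_splitTree {n : ℕ} {u v : Fin n → List Bool} (hu : IsCompletePrefixCode u)
    (hf : ∀ i, ReplacesPrefix f (u i) (v i)) : (splitTree f : Set (List Bool)).Finite :=
  (finite_codeTree hu).subset (splitTree_le_codeTree hf)

theorem ncard_splitTree_lt {n : ℕ} {u v : Fin n → List Bool} (hu : IsCompletePrefixCode u)
    (hf : ∀ i, ReplacesPrefix f (u i) (v i)) : (splitTree f : Set (List Bool)).ncard < n :=
  (Set.ncard_le_ncard (splitTree_le_codeTree hf) (finite_codeTree hu)).trans_lt
    (ncard_codeTree_lt hu)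

theorem mem_iterateSplitTree : p ∈ iterateSplitTree g ↔ ∃ j : ℕ, p ∈ splitTree g^[j] := by
  rw [← SetLike.mem_coe, iterateSplitTree]
  simp

theorem notMem_iterateSplitTree :
    p ∉ iterateSplitTree g ↔ ∀ j : ℕ, ∃ q, ReplacesPrefix g^[j] p q := by
  simp only [mem_iterateSplitTree, not_exists, notMem_splitTree]

theorem notMem_iterateSplitTree_of_replacesPrefix {i : ℕ} (hp : p ∉ iterateSplitTree g)
    (hpq : ReplacesPrefix g^[i] p q) : q ∉ iterateSplitTree g := by
  rw [notMem_iterateSplitTree] at hp ⊢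
  intro j
  obtain ⟨r, hr⟩ := hp (j + i)
  rw [Function.iterate_add] at hr
  exact ⟨r, hr.of_comp hpq⟩

theorem exists_iterate_mem_splitTree (hp : p ∈ iterateSplitTree g) :
    ∃ j d, ReplacesPrefix g^[j] p d ∧ d ∈ splitTree g := by
  classical
  have hex := mem_iterateSplitTree.1 hp
  obtain ⟨j, hj⟩ : ∃ j, Nat.find hex = j + 1 := Nat.exists_eq_succ_of_ne_zero fun h0 =>
    (h0 ▸ Nat.find_spec hex : p ∈ splitTree g^[0]) p (ReplacesPrefix.refl p)
  obtain ⟨d, hd⟩ := notMem_splitTree.1 (Nat.find_min hex (by omega : j < Nat.find hex))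
  refine ⟨j, d, hd, fun q hdq => ?_⟩
  have hsplit : p ∈ splitTree g^[j + 1] := hj ▸ Nat.find_spec hex
  rw [Function.iterate_succ'] at hsplit
  exact hsplit q (hdq.comp hd)

theorem iterate_iterate_eq_id (hg : g^[m] = id) (k : ℕ) : (g^[k])^[m] = id := by
  rw [← Function.iterate_mul, mul_comm, Function.iterate_mul, hg, Function.iterate_id]

-- Otherwise a power of `g` would replace `p` by a proper extension of `p`.
theorem eq_of_prefix_of_replacesPrefix_iterate (hm : 0 < m) (hg : g^[m] = id) {a b : ℕ}
    {d : List Bool} (hp : ReplacesPrefix g^[a] p d) (hq : ReplacesPrefix g^[b] q d)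
    (hpq : p <+: q) : p = q := by
  obtain ⟨z, rfl⟩ := hpq
  have hreturn := (hq.iterate_pred hm (iterate_iterate_eq_id hg b)).comp hp
  rw [← Function.iterate_mul, ← Function.iterate_add] at hreturn
  rw [hreturn.eq_nil_of_append hm (iterate_iterate_eq_id hg _), List.append_nil]

theorem length_lt_ncard_splitTree (hm : 0 < m) (hg : g^[m] = id)
    (hfin : (splitTree g : Set (List Bool)).Finite) (hp : p ∈ iterateSplitTree g) :
    p.length < (splitTree g : Set (List Bool)).ncard := by
  have hexit : ∀ i : ℕ, ∃ d ∈ splitTree g, ∃ j : ℕ, ReplacesPrefix g^[j] (p.take i) d := by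
    intro i
    obtain ⟨j, d, hj, hd⟩ := exists_iterate_mem_splitTree
      (Descriptive.Tree.mem_of_prefix (p.take_prefix i) hp)
    exact ⟨d, hd, j, hj⟩
  choose exit hexit_mem time htime using hexit
  have hinj : Set.InjOn exit (Set.Iic p.length) := by
    intro i hi k hk hik
    have htake : p.take i = p.take k := by
      have hk' := hik ▸ htime k
      rcases List.prefix_or_prefix_of_prefix (p.take_prefix i) (p.take_prefix k) with h | h
      · exact eq_of_prefix_of_replacesPrefix_iterate hm hg (htime i) hk' h
      · exact (eq_of_prefix_of_replacesPrefix_iterate hm hg hk' (htime i) h).symm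
    simpa [Set.mem_Iic.1 hi, Set.mem_Iic.1 hk] using congrArg List.length htake
  simpa [Set.ncard_eq_toFinset_card'] using
    Set.ncard_le_ncard_of_injOn exit (fun i _ => hexit_mem i) hinj hfin

theorem finite_iterateSplitTree (hm : 0 < m) (hg : g^[m] = id)
    (hfin : (splitTree g : Set (List Bool)).Finite) :
    (iterateSplitTree g : Set (List Bool)).Finite :=
  (List.finite_length_lt Bool _).subset fun _ hp => length_lt_ncard_splitTree hm hg hfin hp

theorem ncard_leaves_iterateSplitTree_le (hm : 0 < m) (hg : g^[m] = id)
    (hfin : (splitTree g : Set (List Bool)).Finite) :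
    (leaves (iterateSplitTree g)).ncard ≤ 2 ^ (splitTree g : Set (List Bool)).ncard := by
  simpa using ncard_leaves_le_pow fun _ hp => length_lt_ncard_splitTree hm hg hfin hp

theorem mem_leaves_of_replacesPrefix (hm : 0 < m) (hg : g^[m] = id)
    (hw : w ∈ leaves (iterateSplitTree g)) (hwq : ReplacesPrefix g w q) :
    q ∈ leaves (iterateSplitTree g) := by
  refine ⟨notMem_iterateSplitTree_of_replacesPrefix (i := 1) hw.1 hwq, ?_⟩
  rintro p b rfl
  by_contra hp
  obtain ⟨r, hr⟩ := notMem_iterateSplitTree.1 hp (m - 1)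
  have hwr : w = r ++ [b] := (hwq.iterate_pred hm hg).right_unique (hr.append [b])
  exact notMem_iterateSplitTree_of_replacesPrefix hp hr (hw.2 r b hwr)

theorem exists_iterate_mem_leaves_splitTree (hw : w ∈ leaves (iterateSplitTree g)) :
    ∃ j q, ReplacesPrefix g^[j] w q ∧ q ∈ leaves (splitTree g) := by
  have hout {q : List Bool} (hq : q ∉ iterateSplitTree g) : q ∉ splitTree g := fun h =>
    hq (mem_iterateSplitTree.2 ⟨1, h⟩)
  rcases List.eq_nil_or_concat' w with rfl | ⟨p, b, rfl⟩
  · exact ⟨0, [], ReplacesPrefix.refl [], hout hw.1, by simp⟩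
  · obtain ⟨j, d, hpd, hd⟩ := exists_iterate_mem_splitTree (hw.2 p b rfl)
    have hstep := hpd.append [b]
    refine ⟨j, d ++ [b], hstep,
      hout (notMem_iterateSplitTree_of_replacesPrefix hw.1 hstep), fun q c hq => ?_⟩
    rwa [← (List.append_inj' hq rfl).1]

end SplitTree

section LeafPermutation

open MulAction

variable {g : (ℕ → Bool) → ℕ → Bool} {m : ℕ}

theorem replacesPrefix_iterate {s : Set (List Bool)} {φ : s → s}
    (hφ : ∀ w : s, ReplacesPrefix g w (φ w)) (j : ℕ) (w : s) :
    ReplacesPrefix g^[j] w (φ^[j] w) := by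
  induction j with
  | zero => exact ReplacesPrefix.refl w
  | succ j ih =>
    rw [Function.iterate_succ', Function.iterate_succ_apply']
    exact (hφ _).comp ih

theorem iterate_eq_id_iff {T : Descriptive.tree Bool} (hT : (T : Set (List Bool)).Finite)
    {φ : leaves T → leaves T} (hφ : ∀ w : leaves T, ReplacesPrefix g w (φ w)) (j : ℕ) :
    φ^[j] = id ↔ g^[j] = id := by
  constructor
  · intro h
    funext x
    obtain ⟨w, hw, y, rfl⟩ := exists_mem_leaves_cat_eq hT x
    rw [replacesPrefix_iterate hφ j ⟨w, hw⟩ y, h]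
    rfl
  · intro h
    ext w : 2
    exact (h ▸ replacesPrefix_iterate hφ j w).right_unique (ReplacesPrefix.refl w)

theorem exists_perm_leaves_iterateSplitTree (hm : 0 < m) (hg : g^[m] = id)
    (hfin : (iterateSplitTree g : Set (List Bool)).Finite) :
    ∃ π : Equiv.Perm (leaves (iterateSplitTree g)),
      ∀ w : leaves (iterateSplitTree g), ReplacesPrefix g w (π w) := by
  have himage : ∀ w : leaves (iterateSplitTree g), ∃ q : leaves (iterateSplitTree g),
      ReplacesPrefix g w q := fun w => by
    obtain ⟨q, hq⟩ := notMem_iterateSplitTree.1 w.2.1 1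
    exact ⟨⟨q, mem_leaves_of_replacesPrefix hm hg w.2 hq⟩, hq⟩
  choose φ hφ using himage
  have hperiod : φ^[m - 1 + 1] = id := by
    rw [Nat.sub_add_cancel hm, iterate_eq_id_iff hfin hφ, hg]
  refine ⟨⟨φ, φ^[m - 1], fun w => ?_, fun w => ?_⟩, hφ⟩
  · rw [← Function.iterate_succ_apply φ, hperiod, id]
  · rw [← Function.iterate_succ_apply' φ, hperiod, id]

theorem pow_eq_one_iff_iterate_eq_id {T : Descriptive.tree Bool}
    (hT : (T : Set (List Bool)).Finite) {π : Equiv.Perm (leaves T)}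
    (hπ : ∀ w : leaves T, ReplacesPrefix g w (π w)) (j : ℕ) : π ^ j = 1 ↔ g^[j] = id := by
  rw [← iterate_eq_id_iff hT hπ, Equiv.Perm.iterate_eq_pow, ← Equiv.Perm.coe_one,
    DFunLike.coe_fn_eq]

theorem card_orbits_le_ncard_leaves_splitTree {π : Equiv.Perm (leaves (iterateSplitTree g))}
    (hπ : ∀ w : leaves (iterateSplitTree g), ReplacesPrefix g w (π w))
    (hfin : (leaves (splitTree g)).Finite) :
    Nat.card (orbitRel.Quotient (Subgroup.zpowers π) (leaves (iterateSplitTree g))) ≤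
      (leaves (splitTree g)).ncard := by
  have hrep : ∀ ω : orbitRel.Quotient (Subgroup.zpowers π) (leaves (iterateSplitTree g)),
      ∃ q : leaves (splitTree g), ∃ w ∈ ω.orbit, (w : List Bool) = q := fun ω => by
    induction ω using Quotient.inductionOn' with | h w
    obtain ⟨j, q, hwq, hq⟩ := exists_iterate_mem_leaves_splitTree w.2
    refine ⟨⟨q, hq⟩, (π ^ j) w, ?_, ?_⟩
    · exact ⟨⟨π ^ j, j, zpow_natCast π j⟩, rfl⟩
    · rw [← Equiv.Perm.iterate_eq_pow]
      exact (replacesPrefix_iterate hπ j w).right_unique hwq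
  choose rep w hw hrep using hrep
  have := hfin.to_subtype
  refine Nat.card_le_card_of_injective rep fun ω ω' h => ?_
  have hww : w ω = w ω' := Subtype.ext (by rw [hrep, hrep, h])
  rw [← orbitRel.Quotient.mem_orbit.1 (hw ω), hww, orbitRel.Quotient.mem_orbit.1 (hw ω')]

end LeafPermutation

/-- If a prefix-exchange map `g` with `n ≥ 1` parts has finite order, then its order is
`lcm(l_1, …, l_k)` for some `1 ≤ k ≤ n` and positive integers `l_i` with
`l_1 + ⋯ + l_k ≤ 2^(n-1)`. -/
theorem finite_order_is_lcm_of_orbit_lengths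
    (n : ℕ) (hn : 1 ≤ n) (g : (ℕ → Bool) → ℕ → Bool)
    (hpe : IsPrefixExchange n g) (hfin : ∃ m, 0 < m ∧ g^[m] = id) :
    ∃ k, 1 ≤ k ∧ k ≤ n ∧ ∃ l : Fin k → ℕ,
      (∀ i, 0 < l i) ∧ (∑ i, l i) ≤ 2 ^ (n - 1) ∧
      ∃ ord, 0 < ord ∧ g^[ord] = id ∧ (∀ j, 0 < j → j < ord → g^[j] ≠ id) ∧
        ord = Finset.univ.lcm l := by
  obtain ⟨u, v, hu, -, σ, hguv⟩ := hpe
  obtain ⟨m, hm, hgm⟩ := hfin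
  have hsplit := finite_splitTree hu hguv
  have hcard : (splitTree g : Set (List Bool)).ncard < n := ncard_splitTree_lt hu hguv
  have hiter := finite_iterateSplitTree hm hgm hsplit
  obtain ⟨π, hπ⟩ := exists_perm_leaves_iterateSplitTree hm hgm hiter
  have hpow := pow_eq_one_iff_iterate_eq_id hiter hπ
  have := (finite_leaves hiter).to_subtype
  obtain ⟨w, hw⟩ := nonempty_leaves hiter
  let e := (Finite.equivFin (MulAction.orbitRel.Quotient (Subgroup.zpowers π)
    (leaves (iterateSplitTree g)))).symm
  refine ⟨_, (e.symm (Quotient.mk'' ⟨w, hw⟩)).pos, ?_, fun i => (e i).orbit.ncard, fun i => ?_, ?_,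
    orderOf π, orderOf_pos π, (hpow _).1 (pow_orderOf_eq_one π), fun j hj hlt => ?_,
    orderOf_eq_lcm_ncard_orbit π e⟩
  · calc _ ≤ (leaves (splitTree g)).ncard :=
          card_orbits_le_ncard_leaves_splitTree hπ (finite_leaves hsplit)
      _ ≤ n := by rwa [ncard_leaves_bool hsplit]
  · exact (Set.ncard_pos (Set.toFinite _)).2 (MulAction.orbitRel.Quotient.nonempty_orbit (e i))
  · calc _ = (leaves (iterateSplitTree g)).ncard := sum_ncard_orbit e
      _ ≤ 2 ^ (splitTree g : Set (List Bool)).ncard :=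
          ncard_leaves_iterateSplitTree_le hm hgm hsplit
      _ ≤ 2 ^ (n - 1) := Nat.pow_le_pow_right two_pos (Nat.le_sub_one_of_lt hcard)
  · exact (hpow j).not.1 (pow_ne_one_of_lt_orderOf hj.ne' hlt)
end
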